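/- Bound on bisimulation distance with encoder error: let f̂ : S → S and bounded r̂ : S → ℝ be approximate dynamics with bisimulation metric d̂(s,t) := c_R · ∑_{n=0}^∞ c_T^n · |r̂(f̂^n(s)) − r̂(f̂^n(t))|, and let φ : S → E be an encoder into a normed space E, with encoded distance d̂_φ(s,t) := ‖φ(s) − φ(t)‖. Suppose ε_φ, ε_r, ε_P ≥ 0 satisfy |d̂_φ(s,t) − d̂(s,t)| ≤ ε_φ for all s,t ∈ S, |r̂(s) − r(s)| ≤ ε_r for all s ∈ S, and d(f(s), f̂(s)) ≤ ε_P for all s ∈ S. Then for all s, t ∈ S, |d(s,t) − d̂_φ(s,t)| ≤ ε_φ + (2·c_R·ε_r)/(1 − c_T) + (2·c_T·ε_P)/(1 − c_T). -/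

import Mathlib

/-- The deterministic on-policy bisimulation metric. -/
noncomputable def bisimD {S : Type*} (f : S → S) (r : S → ℝ) (cR cT : ℝ)
    (s t : S) : ℝ :=
  cR * ∑' n : ℕ, cT ^ n * |r (f^[n] s) - r (f^[n] t)|

theorem bisimD_summable_aux {S : Type*} (f : S → S) (r : S → ℝ) (M : ℝ) (hr : ∀ s, |r s| ≤ M)
    (cT : ℝ) (h0 : 0 ≤ cT) (h1 : cT < 1) (s t : S) :
    Summable (fun n : ℕ => cT ^ n * |r (f^[n] s) - r (f^[n] t)|) := by
  refine Summable.of_nonneg_of_le (fun n => by positivity) (fun n => ?_)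
    ((summable_geometric_of_lt_one h0 h1).mul_right (2 * M))
  refine mul_le_mul_of_nonneg_left ?_ (by positivity)
  have := abs_sub (r (f^[n] s)) (r (f^[n] t))
  linarith [hr (f^[n] s), hr (f^[n] t)]

theorem bisimD_rec_aux {S : Type*} (f : S → S) (r : S → ℝ) (M : ℝ) (hr : ∀ s, |r s| ≤ M)
    (cR cT : ℝ) (h0 : 0 ≤ cT) (h1 : cT < 1) (s t : S) :
    bisimD f r cR cT s t = cR * |r s - r t| + cT * bisimD f r cR cT (f s) (f t) := by
  unfold bisimD
  rw [(bisimD_summable_aux f r M hr cT h0 h1 s t).tsum_eq_zero_add]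
  have : ∀ n : ℕ, cT ^ (n+1) * |r (f^[n+1] s) - r (f^[n+1] t)|
      = cT * (cT ^ n * |r (f^[n] (f s)) - r (f^[n] (f t))|) := by
    intro n
    rw [Function.iterate_succ_apply, Function.iterate_succ_apply]
    ring
  simp only [this, tsum_mul_left]
  simp
  ring

theorem bisimD_bdd_aux {S : Type*} (f : S → S) (r : S → ℝ) (M : ℝ) (hr : ∀ s, |r s| ≤ M)
    (cR cT : ℝ) (hc : 0 ≤ cR) (h0 : 0 ≤ cT) (h1 : cT < 1) (s t : S) :
    |bisimD f r cR cT s t| ≤ cR * ∑' n : ℕ, cT ^ n * (2 * M) := by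
  unfold bisimD
  rw [abs_of_nonneg (mul_nonneg hc (tsum_nonneg fun n => by positivity))]
  refine mul_le_mul_of_nonneg_left ?_ hc
  refine (bisimD_summable_aux f r M hr cT h0 h1 s t).tsum_le_tsum (fun n => ?_)
    ((summable_geometric_of_lt_one h0 h1).mul_right (2 * M))
  refine mul_le_mul_of_nonneg_left ?_ (by positivity)
  have := abs_sub (r (f^[n] s)) (r (f^[n] t))
  linarith [hr (f^[n] s), hr (f^[n] t)]

theorem bisimD_comm_aux {S : Type*} (f : S → S) (r : S → ℝ) (cR cT : ℝ) (s t : S) :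
    bisimD f r cR cT s t = bisimD f r cR cT t s := by
  unfold bisimD
  simp only [abs_sub_comm]

theorem bisimD_tri_aux {S : Type*} (f : S → S) (r : S → ℝ) (M : ℝ) (hr : ∀ s, |r s| ≤ M)
    (cR cT : ℝ) (hc : 0 ≤ cR) (h0 : 0 ≤ cT) (h1 : cT < 1) (s t u : S) :
    bisimD f r cR cT s u ≤ bisimD f r cR cT s t + bisimD f r cR cT t u := by
  have H := bisimD_summable_aux f r M hr cT h0 h1
  unfold bisimD
  rw [← mul_add, ← (H s t).tsum_add (H t u)]
  refine mul_le_mul_of_nonneg_left ?_ hc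
  refine (H s u).tsum_le_tsum (fun n => ?_) ((H s t).add (H t u))
  rw [← mul_add]
  exact mul_le_mul_of_nonneg_left (abs_sub_le _ _ _) (by positivity)

/-- Bound on bisimulation distance with encoder error: with approximate
dynamics `(f̂, r̂)` and encoder `φ` into a normed space, if
`|‖φ s − φ t‖ − d̂(s,t)| ≤ ε_φ`, `|r̂ s − r s| ≤ ε_r`, and `d(f s, f̂ s) ≤ ε_P`, then
`|d(s,t) − ‖φ s − φ t‖| ≤ ε_φ + (2·c_R·ε_r)/(1 − c_T) + (2·c_T·ε_P)/(1 − c_T)`. -/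
theorem bisim_distance_encoder_error
    {S : Type*} [Nonempty S] (f : S → S) (r : S → ℝ)
    (hr : ∃ M, ∀ s, |r s| ≤ M)
    (cR cT : ℝ) (hcR : 0 ≤ cR) (hcT0 : 0 ≤ cT) (hcT1 : cT < 1)
    (fhat : S → S) (rhat : S → ℝ) (hrhat : ∃ M, ∀ s, |rhat s| ≤ M)
    {E : Type*} [NormedAddCommGroup E] [NormedSpace ℝ E] (φ : S → E)
    (εφ εr εP : ℝ) (hεφ : 0 ≤ εφ) (hεr : 0 ≤ εr) (hεP : 0 ≤ εP)
    (hφerr : ∀ s t, |‖φ s - φ t‖ - bisimD fhat rhat cR cT s t| ≤ εφ)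
    (hrerr : ∀ s, |rhat s - r s| ≤ εr)
    (hPerr : ∀ s, bisimD f r cR cT (f s) (fhat s) ≤ εP) :
    ∀ s t : S, |bisimD f r cR cT s t - ‖φ s - φ t‖| ≤
      εφ + 2 * cR * εr / (1 - cT) + 2 * cT * εP / (1 - cT) := by
  intro s t
  obtain ⟨M, hM⟩ := hr
  obtain ⟨M', hM'⟩ := hrhat
  have hpos : 0 < 1 - cT := by linarith
  obtain ⟨C, hC⟩ : ∃ C, C = 2 * cR * εr / (1 - cT) + 2 * cT * εP / (1 - cT) := ⟨_, rfl⟩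
  have hCrec : C = 2 * cR * εr + 2 * cT * εP + cT * C := by
    rw [hC]; field_simp; ring
  have hC0 : 0 ≤ C := by rw [hC]; positivity
  obtain ⟨B, hB⟩ : ∃ B, ∀ s t, |bisimD f r cR cT s t - bisimD fhat rhat cR cT s t| ≤ B :=
    ⟨_, fun s t => (abs_sub _ _).trans (add_le_add
      (bisimD_bdd_aux f r M hM cR cT hcR hcT0 hcT1 s t)
      (bisimD_bdd_aux fhat rhat M' hM' cR cT hcR hcT0 hcT1 s t))⟩
  have key : ∀ n : ℕ, ∀ s t, |bisimD f r cR cT s t - bisimD fhat rhat cR cT s t|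
      ≤ C + cT ^ n * B := by
    intro n
    induction n with
    | zero => intro s t; linarith [hB s t]
    | succ n ih =>
      intro s t
      have e1 := bisimD_rec_aux f r M hM cR cT hcT0 hcT1 s t
      have e2 := bisimD_rec_aux fhat rhat M' hM' cR cT hcT0 hcT1 s t
      have tri := bisimD_tri_aux f r M hM cR cT hcR hcT0 hcT1
      have t1 := tri (f s) (fhat s) (f t)
      have t2 := tri (fhat s) (fhat t) (f t)
      have t3 := tri (fhat s) (f s) (fhat t)
      have t4 := tri (f s) (f t) (fhat t)
      rw [bisimD_comm_aux f r cR cT (fhat t) (f t)] at t2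
      rw [bisimD_comm_aux f r cR cT (fhat s) (f s)] at t3
      have p1 := hPerr s
      have p2 := hPerr t
      have ih' := abs_le.mp (ih (fhat s) (fhat t))
      have h1 : |bisimD f r cR cT (f s) (f t) - bisimD fhat rhat cR cT (fhat s) (fhat t)|
          ≤ 2 * εP + (C + cT ^ n * B) := by
        rw [abs_le]; constructor <;> linarith [ih'.1, ih'.2]
      have h2 : |(|r s - r t| - |rhat s - rhat t|)| ≤ 2 * εr := by
        refine (abs_abs_sub_abs_le _ _).trans ?_
        have a := abs_le.mp (hrerr s)
        have b := abs_le.mp (hrerr t)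
        rw [abs_le]; constructor <;> linarith [a.1, a.2, b.1, b.2]
      rw [e1, e2]
      calc _ = |cR * (|r s - r t| - |rhat s - rhat t|) + cT * (bisimD f r cR cT (f s) (f t)
              - bisimD fhat rhat cR cT (fhat s) (fhat t))| := by congr 1; ring
        _ ≤ cR * (2 * εr) + cT * (2 * εP + (C + cT ^ n * B)) := by
            refine (abs_add_le _ _).trans ?_
            rw [abs_mul, abs_mul, abs_of_nonneg hcR, abs_of_nonneg hcT0]
            gcongr
        _ = (2 * cR * εr + 2 * cT * εP + cT * C) + cT ^ (n+1) * B := by ring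
        _ = C + cT ^ (n+1) * B := by rw [← hCrec]
  have lim : Filter.Tendsto (fun n : ℕ => C + cT ^ n * B) Filter.atTop (nhds C) := by
    simpa using ((tendsto_pow_atTop_nhds_zero_of_lt_one hcT0 hcT1).mul_const B).const_add C
  have fin := ge_of_tendsto' lim (fun n => key n s t)
  have a := abs_le.mp fin
  have b := abs_le.mp (hφerr s t)
  rw [add_assoc, ← hC, abs_le]
  constructor <;> linarith [a.1, a.2, b.1, b.2]
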